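/- For all n ≥ 2, L^{n−2}(1) = Σ_{k=0}^{n−2} P_n^{(k)}(x) · t^k in ℝ[x,t], where L^{n−2} denotes the (n−2)-fold composition of L with itself and the integer polynomials P_n^{(k)}(x) are regarded as elements of ℝ[x]. -/

import Mathlib

/-!
A Dyck path ending with `U D^{k+1} U D` is determined by the prefix `t` left after deleting that
tail. The prefixes that arise are the nonnegative `±1`-paths ending at height `k`, with
`length + k = 2 (n - 2)` (`IsPrefix`, `dyck_iff`).

For `n ≥ 3` such a prefix is nonempty, and cutting it at its last up step writes it uniquely as
`t ++ U D^r`, where `t` is a prefix for `n - 1` ending at height `j = k + r - 1`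
(`isPrefix_succ`, `append_peak_inj`). Every `j` with `k ≤ j + 1` occurs, and the completed path
gains rank exactly `k` (`area_peak`). Hence the rank generating functions satisfy
`G_{m+1,k} = x^k ∑_{j ≥ k - 1} G_{m,j}` (`genPoly_succ`), which is how `L` acts on the coefficients
of `t^k` (`Lop_sum`). Induction on `m = n - 2` gives the theorem, once `Pnk`, defined by counting
paths of each rank, is identified with the sum of `x^rank` over prefixes (`Pnk_eq`).
-/

/-- A Dyck path is a list of steps in `{+1, -1}` whose partial sums (heights)
are all nonnegative and whose total sum is `0`. -/
def IsDyck (s : List ℤ) : Prop :=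
  (∀ x ∈ s, x = 1 ∨ x = -1) ∧ (∀ i : ℕ, 0 ≤ (s.take i).sum) ∧ s.sum = 0

/-- The area of a path: the sum of all heights `h_0, …, h_{length}`. -/
def area (s : List ℤ) : ℤ :=
  ∑ i ∈ Finset.range (s.length + 1), (s.take i).sum

/-- The length of the last descent, i.e. of the final maximal run of `-1` steps. -/
def lastDescentLen (s : List ℤ) : ℕ :=
  (s.reverse.takeWhile (fun x => x == (-1 : ℤ))).length

/-- The son of a path `s` at height `j`: insert a peak `+1, -1` immediately
after position `length - j`. -/
def son (s : List ℤ) (j : ℕ) : List ℤ :=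
  s.take (s.length - j) ++ [1, -1] ++ s.drop (s.length - j)

/-- `endsUDkUD s k` says the final `k + 3` steps of `s` are
`+1`, followed by `k + 1` copies of `-1`, followed by `+1, -1`
(i.e. `s` ends with `U D^{k+1} U D`). -/
def endsUDkUD (s : List ℤ) (k : ℕ) : Prop :=
  ∃ t : List ℤ, s = t ++ (1 :: (List.replicate (k + 1) (-1) ++ [1, -1]))

/-- The polynomial `P_n^{(k)}(x) = Σ_P x^{rank P}`, the sum being over all Dyck
paths `P` of semilength `n` ending with `U D^{k+1} U D`; the coefficient of
`x^i` is the number of such paths of rank `i`, i.e. of area `n + 2i`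
(all ranks are at most `n(n-1)/2 ≤ n²`, so the range below is exhaustive). -/
noncomputable def Pnk (n k : ℕ) : Polynomial ℤ :=
  ∑ i ∈ Finset.range (n * n + 1),
    Polynomial.C ((Nat.card {P : List ℤ // IsDyck P ∧ P.length = 2 * n ∧
      endsUDkUD P k ∧ area P = (n : ℤ) + 2 * i}) : ℤ) * Polynomial.X ^ i

/-- The operator `L` on `ℝ[x][t]` (the outer variable `X` is `t`, the inner one
is `x`): it is the unique `ℝ`-linear endomorphism of `ℝ[x,t]` with
`L(x^α t^β) = x^α · Σ_{i=0}^{β+1} x^i t^i`. -/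
noncomputable def Lop (q : Polynomial (Polynomial ℝ)) : Polynomial (Polynomial ℝ) :=
  ∑ β ∈ q.support, Polynomial.C (q.coeff β) *
    ∑ i ∈ Finset.range (β + 2), Polynomial.C (Polynomial.X ^ i) * Polynomial.X ^ i

/-- The final steps `U D^{k+1} U D`. -/
def tailPath (k : ℕ) : List ℤ := 1 :: (List.replicate (k + 1) (-1) ++ [1, -1])

/-- The steps `U D^r`. -/
def peak (r : ℕ) : List ℤ := 1 :: List.replicate r (-1)

/-- `t` is what remains of a Dyck path of semilength `m + 2` ending with `U D^{k+1} U D` after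
this tail is deleted: a nonnegative path ending at height `k`, of length `2 m - k`. -/
def IsPrefix (m k : ℕ) (t : List ℤ) : Prop :=
  (∀ x ∈ t, x = 1 ∨ x = -1) ∧ (∀ i : ℕ, 0 ≤ (t.take i).sum) ∧ t.sum = k ∧ t.length + k = 2 * m

/-- The finite set of prefixes satisfying `IsPrefix m k`, generated by appending `U D^r`. -/
def prefixes : ℕ → ℕ → Finset (List ℤ)
  | 0, k => if k = 0 then {[]} else ∅
  | m + 1, k => ((Finset.range (m + 1)).filter (fun j => k ≤ j + 1)).biUnion
      (fun j => (prefixes m j).image (fun t => t ++ peak (j + 1 - k)))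

/-- The rank of the path of semilength `m + 2` obtained by completing the prefix `t` with
`U D^{k+1} U D`. -/
def prefixRank (m k : ℕ) (t : List ℤ) : ℕ := ((area (t ++ tailPath k) - (m + 2)) / 2).toNat

/-- The rank generating function of the prefixes, as a real polynomial. -/
noncomputable def genPoly (m k : ℕ) : Polynomial ℝ :=
  ∑ t ∈ prefixes m k, Polynomial.X ^ prefixRank m k t

/-! ### Area -/

lemma area_cons (x : ℤ) (s : List ℤ) : area (x :: s) = area s + (s.length + 1) * x := by
  unfold area
  rw [List.length_cons, Finset.sum_range_succ']
  simp [List.take_succ_cons, Finset.sum_add_distrib]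
  ring

lemma area_append (s r : List ℤ) : area (s ++ r) = area s + area r + r.length * s.sum := by
  induction s with
  | nil => simp [area]
  | cons x s ih =>
    rw [List.cons_append, area_cons, ih, area_cons]
    simp
    ring

lemma two_mul_area_replicate (d : ℕ) :
    2 * area (List.replicate d (-1)) = -((d : ℤ) * (d + 1)) := by
  induction d with
  | zero => simp [area]
  | succ d ih =>
    rw [List.replicate_succ, area_cons, mul_add, ih]
    simp
    ring

lemma two_mul_area_tailPath (k : ℕ) :
    2 * area (tailPath k) = -(((k : ℤ) + 1) * (k + 2)) + 2 * (1 - 2 * (k + 1)) + 2 * (k + 4) := by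
  have h := two_mul_area_replicate (k + 1)
  have h1 : area [1, -1] = 1 := by decide
  rw [tailPath, area_cons, area_append, h1]
  simp only [List.length_append, List.length_replicate, List.sum_replicate, List.length_cons,
    List.length_nil]
  push_cast at h ⊢
  simp only [nsmul_eq_mul]
  push_cast
  linear_combination h

/-- Passing from the prefix `t` (ending at height `j`) to `t ++ U D^r` adds one to the semilength
and `k` to the rank of the completed path, where `k = j + 1 - r` is the new final height. -/
lemma area_peak (t : List ℤ) (j k : ℕ) (ht : t.sum = j) (hk : k ≤ j + 1) :
    area (t ++ peak (j + 1 - k) ++ tailPath k) = area (t ++ tailPath j) + 1 + 2 * k := by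
  obtain ⟨r, hr⟩ := Nat.exists_eq_add_of_le hk
  have hr' : j + 1 - k = r := by omega
  have hrz : (j : ℤ) + 1 = k + r := by exact_mod_cast hr
  have hj : (j : ℤ) = k + r - 1 := by linarith
  have h1 := two_mul_area_tailPath k
  have h2 := two_mul_area_tailPath j
  have h3 := two_mul_area_replicate r
  have l : ∀ k, ((tailPath k).length : ℤ) = k + 4 := by
    intro k; simp [tailPath]; ring
  rw [hr', area_append, area_append, area_append, peak, area_cons, l, l]
  simp only [List.length_cons, List.length_replicate, List.sum_append, List.sum_cons,
    List.sum_replicate, nsmul_eq_mul, ht]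
  push_cast
  rw [hj] at h2 ⊢
  refine mul_left_cancel₀ (two_ne_zero (α := ℤ)) ?_
  linear_combination h1 - h2 + h3

/-! ### Nonnegative paths and the last up step -/

lemma nonneg_append (s r : List ℤ) :
    (∀ i : ℕ, 0 ≤ ((s ++ r).take i).sum) ↔
      (∀ i : ℕ, 0 ≤ (s.take i).sum) ∧ ∀ i : ℕ, 0 ≤ s.sum + (r.take i).sum := by
  constructor
  · intro h
    constructor
    · intro i
      rcases le_total i s.length with hi | hi
      · have := h i
        rwa [List.take_append_of_le_length hi] at this
      · have := h s.length
        rw [List.take_append_of_le_length le_rfl, List.take_length] at this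
        rwa [List.take_of_length_le hi]
    · intro i
      have := h (s.length + i)
      simpa [List.take_append, List.take_of_length_le] using this
  · rintro ⟨h1, h2⟩ i
    rcases le_total i s.length with hi | hi
    · rw [List.take_append_of_le_length hi]; exact h1 i
    · obtain ⟨c, rfl⟩ := Nat.exists_eq_add_of_le hi
      simpa [List.take_append, List.take_of_length_le] using h2 c

lemma nonneg_peak (c : ℤ) (r : ℕ) (hc : 0 ≤ c) (hr : (r : ℤ) ≤ c + 1) (i : ℕ) :
    0 ≤ c + ((peak r).take i).sum := by
  cases i with
  | zero => simpa using hc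
  | succ i =>
    simp only [peak, List.take_succ_cons, List.sum_cons, List.take_replicate, List.sum_replicate,
      nsmul_eq_mul]
    have : ((min i r : ℕ) : ℤ) ≤ r := by exact_mod_cast min_le_right _ _
    linarith

lemma tailPath_eq (k : ℕ) : tailPath k = peak (k + 1) ++ peak 1 := by
  simp [tailPath, peak]

lemma sum_peak (r : ℕ) : (peak r).sum = 1 - r := by
  simp [peak]; ring

lemma mem_peak {r : ℕ} {x : ℤ} (h : x ∈ peak r) : x = 1 ∨ x = -1 := by
  simp only [peak, List.mem_cons, List.mem_replicate] at h
  tauto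

lemma nonneg_tail (k i : ℕ) : 0 ≤ (k : ℤ) + ((tailPath k).take i).sum := by
  have h1 := nonneg_peak k (k + 1) (by positivity) (by push_cast; rfl)
  have h2 := nonneg_peak 0 1 le_rfl (by norm_num)
  -- View the height `k` as reached by a run of `k` up steps.
  have h3 := (nonneg_append (List.replicate k 1 ++ peak (k + 1)) (peak 1)).2
    ⟨(nonneg_append _ _).2 ⟨fun i => by simp [List.take_replicate],
      fun i => by simpa using h1 i⟩, fun i => by
        have := h2 i
        rw [List.sum_append, sum_peak]
        simpa using this⟩
  rw [List.append_assoc, ← tailPath_eq] at h3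
  simpa using ((nonneg_append _ _).1 h3).2 i

lemma dyck_iff (m k : ℕ) (P : List ℤ) :
    (IsDyck P ∧ P.length = 2 * (m + 2) ∧ endsUDkUD P k) ↔
      ∃ t, IsPrefix m k t ∧ P = t ++ tailPath k := by
  have hs : (tailPath k).sum = -k := by
    rw [tailPath_eq, List.sum_append, sum_peak, sum_peak]; push_cast; ring
  have hl : (tailPath k).length = k + 4 := by simp [tailPath]
  constructor
  · rintro ⟨⟨h1, h2, h3⟩, h4, t, rfl⟩
    rw [← tailPath] at *
    refine ⟨t, ⟨fun x hx => h1 x (by simp [hx]), ((nonneg_append _ _).1 h2).1, ?_, ?_⟩, rfl⟩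
    · rw [List.sum_append, hs] at h3; linarith
    · rw [List.length_append, hl] at h4; omega
  · rintro ⟨t, ⟨h1, h2, h3, h4⟩, rfl⟩
    refine ⟨⟨?_, ?_, ?_⟩, ?_, t, rfl⟩
    · intro x hx
      rw [tailPath_eq, List.mem_append, List.mem_append] at hx
      rcases hx with hx | hx | hx
      · exact h1 x hx
      · exact mem_peak hx
      · exact mem_peak hx
    · exact (nonneg_append _ _).2 ⟨h2, fun i => by rw [h3]; exact nonneg_tail k i⟩
    · rw [List.sum_append, hs, h3]; ring
    · rw [List.length_append, hl]; omega

/-- A `±1`-word is a run of down steps, or it has a last up step. -/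
lemma exists_last_up (u : List ℤ) (h : ∀ x ∈ u, x = 1 ∨ x = -1) :
    (∃ r, u = List.replicate r (-1)) ∨ ∃ t r, u = t ++ peak r := by
  induction u with
  | nil => exact Or.inl ⟨0, rfl⟩
  | cons x s ih =>
    rcases ih (fun y hy => h y (by simp [hy])) with ⟨r, rfl⟩ | ⟨t, r, rfl⟩
    · rcases h x (by simp) with rfl | rfl
      · exact Or.inr ⟨[], r, rfl⟩
      · exact Or.inl ⟨r + 1, rfl⟩
    · exact Or.inr ⟨x :: t, r, rfl⟩

lemma append_peak_inj {s t : List ℤ} {a b : ℕ} (h : s ++ peak a = t ++ peak b) :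
    s = t ∧ a = b := by
  have hp : ∀ r, peak (r + 1) = peak r ++ [-1] := fun r => by
    simp [peak, List.replicate_succ']
  induction a generalizing b with
  | zero =>
    cases b with
    | zero => exact ⟨by simpa [peak] using h, rfl⟩
    | succ b =>
      have := congrArg List.getLast? h
      rw [hp, ← List.append_assoc, List.getLast?_concat] at this
      simp [peak] at this
  | succ a ih =>
    cases b with
    | zero =>
      have := congrArg List.getLast? h
      rw [hp, ← List.append_assoc, List.getLast?_concat] at this
      simp [peak] at this
    | succ b =>
      rw [hp, hp, ← List.append_assoc, ← List.append_assoc] at h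
      obtain ⟨h1, h2⟩ := ih (List.append_cancel_right h)
      exact ⟨h1, by rw [h2]⟩

lemma isPrefix_le {m k : ℕ} {t : List ℤ} (h : IsPrefix m k t) : k ≤ m := by
  obtain ⟨h1, -, h3, h4⟩ := h
  have : t.sum ≤ t.length := by
    have := List.sum_le_card_nsmul t 1 (fun x hx => by rcases h1 x hx with rfl | rfl <;> norm_num)
    simpa using this
  omega

lemma isPrefix_zero (k : ℕ) (t : List ℤ) : IsPrefix 0 k t ↔ k = 0 ∧ t = [] := by
  constructor
  · rintro ⟨-, -, -, h4⟩
    exact ⟨by omega, List.length_eq_zero_iff.1 (by omega)⟩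
  · rintro ⟨rfl, rfl⟩
    simp [IsPrefix]

lemma isPrefix_succ (m k : ℕ) (u : List ℤ) :
    IsPrefix (m + 1) k u ↔
      ∃ j t, IsPrefix m j t ∧ k ≤ j + 1 ∧ u = t ++ peak (j + 1 - k) := by
  constructor
  · rintro ⟨h1, h2, h3, h4⟩
    rcases exists_last_up u h1 with ⟨r, rfl⟩ | ⟨t, r, rfl⟩
    · simp at h3 h4
      omega
    · have h2' := (nonneg_append _ _).1 h2
      have h0 : 0 ≤ t.sum := by simpa using h2'.2 0
      obtain ⟨j, hj⟩ := Int.eq_ofNat_of_zero_le h0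
      rw [List.sum_append, sum_peak, hj] at h3
      have hlen : (peak r).length = r + 1 := by simp [peak]
      rw [List.length_append, hlen] at h4
      refine ⟨j, t, ⟨fun x hx => h1 x (by simp [hx]), h2'.1, hj, ?_⟩, ?_, ?_⟩
      · omega
      · omega
      · congr 2; omega
  · rintro ⟨j, t, ⟨h1, h2, h3, h4⟩, hk, rfl⟩
    refine ⟨?_, ?_, ?_, ?_⟩
    · intro x hx
      rcases List.mem_append.1 hx with hx | hx
      · exact h1 x hx
      · exact mem_peak hx
    · refine (nonneg_append _ _).2 ⟨h2, nonneg_peak _ _ (by rw [h3]; positivity) ?_⟩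
      rw [h3]; omega
    · rw [List.sum_append, sum_peak, h3]; omega
    · simp only [List.length_append, peak, List.length_cons, List.length_replicate]; omega

lemma mem_prefixes (m k : ℕ) (t : List ℤ) : t ∈ prefixes m k ↔ IsPrefix m k t := by
  induction m generalizing k t with
  | zero =>
    rw [isPrefix_zero, prefixes]
    split_ifs with h <;> simp [h]
  | succ m ih =>
    rw [isPrefix_succ, prefixes]
    simp only [Finset.mem_biUnion, Finset.mem_filter, Finset.mem_range, Finset.mem_image]
    constructor
    · rintro ⟨j, ⟨-, hk⟩, s, hs, rfl⟩
      exact ⟨j, s, (ih _ _).1 hs, hk, rfl⟩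
    · rintro ⟨j, s, hs, hk, rfl⟩
      exact ⟨j, ⟨Nat.lt_succ_of_le (isPrefix_le hs), hk⟩, s, (ih _ _).2 hs, rfl⟩

/-! ### Rank generating functions -/

/-- The rank of a completed path is an integer between `0` and `m²`. -/
lemma exists_rank {m k : ℕ} {t : List ℤ} (h : IsPrefix m k t) :
    ∃ w : ℕ, w ≤ m * m ∧ area (t ++ tailPath k) = m + 2 + 2 * w := by
  induction m generalizing k t with
  | zero =>
    obtain ⟨rfl, rfl⟩ := (isPrefix_zero _ _).1 h
    exact ⟨0, le_rfl, by decide⟩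
  | succ m ih =>
    obtain ⟨j, s, hs, hk, rfl⟩ := (isPrefix_succ _ _ _).1 h
    obtain ⟨w, hw, hA⟩ := ih hs
    have := isPrefix_le hs
    refine ⟨w + k, by nlinarith, ?_⟩
    rw [area_peak s j k hs.2.2.1 hk, hA]
    push_cast
    ring

lemma prefixRank_eq_iff {m k : ℕ} {t : List ℤ} (h : IsPrefix m k t) (i : ℕ) :
    prefixRank m k t = i ↔ area (t ++ tailPath k) = m + 2 + 2 * i := by
  obtain ⟨w, -, hA⟩ := exists_rank h
  rw [prefixRank, hA]
  omega

lemma prefixRank_le {m k : ℕ} {t : List ℤ} (h : IsPrefix m k t) : prefixRank m k t ≤ m * m := by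
  obtain ⟨w, hw, hA⟩ := exists_rank h
  rwa [(prefixRank_eq_iff h w).2 hA]

lemma prefixRank_peak {m j k : ℕ} {t : List ℤ} (h : IsPrefix m j t) (hk : k ≤ j + 1) :
    prefixRank (m + 1) k (t ++ peak (j + 1 - k)) = prefixRank m j t + k := by
  rw [prefixRank_eq_iff ((isPrefix_succ _ _ _).2 ⟨j, t, h, hk, rfl⟩),
    area_peak t j k h.2.2.1 hk, (prefixRank_eq_iff h _).1 rfl]
  push_cast
  ring

lemma genPoly_succ (m k : ℕ) :
    genPoly (m + 1) k = Polynomial.X ^ k *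
      ∑ j ∈ (Finset.range (m + 1)).filter (fun j => k ≤ j + 1), genPoly m j := by
  rw [genPoly, prefixes, Finset.sum_biUnion, Finset.mul_sum]
  · refine Finset.sum_congr rfl fun j hj => ?_
    rw [Finset.sum_image fun s _ t _ h => (append_peak_inj h).1, genPoly, Finset.mul_sum]
    refine Finset.sum_congr rfl fun t ht => ?_
    rw [prefixRank_peak ((mem_prefixes _ _ _).1 ht) (Finset.mem_filter.1 hj).2, pow_add, mul_comm]
  · intro a ha b hb hab
    refine Finset.disjoint_left.2 fun u hu hv => hab ?_
    obtain ⟨s, hs, rfl⟩ := Finset.mem_image.1 hu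
    obtain ⟨t, ht, he⟩ := Finset.mem_image.1 hv
    obtain ⟨rfl, -⟩ := append_peak_inj he
    -- Both `a` and `b` are the final height of the common prefix.
    have h1 := ((mem_prefixes _ _ _).1 hs).2.2.1
    have h2 := ((mem_prefixes _ _ _).1 ht).2.2.1
    exact_mod_cast h1.symm.trans h2

lemma card_paths (m k i : ℕ) :
    Nat.card {P : List ℤ // IsDyck P ∧ P.length = 2 * (m + 2) ∧ endsUDkUD P k ∧
      area P = ((m + 2 : ℕ) : ℤ) + 2 * i} =
      ((prefixes m k).filter (fun t => prefixRank m k t = i)).card := by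
  rw [← Finset.card_image_of_injective _ (List.append_left_injective (tailPath k))]
  refine Nat.subtype_card _ fun P => ?_
  have hd := dyck_iff m k P
  simp only [Finset.mem_image, Finset.mem_filter, mem_prefixes]
  constructor
  · rintro ⟨t, ⟨ht, hr⟩, rfl⟩
    obtain ⟨h1, h2, h3⟩ := hd.2 ⟨t, ht, rfl⟩
    exact ⟨h1, h2, h3, by rw [(prefixRank_eq_iff ht i).1 hr]; push_cast; ring⟩
  · rintro ⟨h1, h2, h3, h4⟩
    obtain ⟨t, ht, rfl⟩ := hd.1 ⟨h1, h2, h3⟩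
    exact ⟨t, ⟨ht, (prefixRank_eq_iff ht i).2 (by rw [h4]; push_cast; ring)⟩, rfl⟩

lemma Pnk_eq (m k : ℕ) : (Pnk (m + 2) k).map (Int.castRingHom ℝ) = genPoly m k := by
  rw [Pnk, Polynomial.map_sum, genPoly,
    ← Finset.sum_fiberwise_of_maps_to (g := prefixRank m k)
      (t := Finset.range ((m + 2) * (m + 2) + 1))]
  · refine Finset.sum_congr rfl fun i _ => ?_
    rw [card_paths, Finset.sum_congr rfl (g := fun _ => (Polynomial.X : Polynomial ℝ) ^ i)
      fun t ht => by rw [(Finset.mem_filter.1 ht).2]]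
    simp
  · intro t ht
    have := prefixRank_le ((mem_prefixes _ _ _).1 ht)
    exact Finset.mem_range.2 (by nlinarith)

/-! ### The operator `L` -/

open Polynomial in
lemma Lop_sum (N : ℕ) (g : ℕ → Polynomial ℝ) :
    Lop (∑ j ∈ Finset.range N, C (g j) * X ^ j) =
      ∑ k ∈ Finset.range (N + 1),
        C (X ^ k * ∑ j ∈ (Finset.range N).filter (fun j => k ≤ j + 1), g j) * X ^ k := by
  have hL : ∀ q : Polynomial (Polynomial ℝ), Lop q = q.sum fun β a => C a *
      ∑ i ∈ Finset.range (β + 2), C (X ^ i) * X ^ i := fun q => rfl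
  have hlin : ∀ M, Lop (∑ j ∈ Finset.range M, C (g j) * X ^ j) =
      ∑ j ∈ Finset.range M, C (g j) * ∑ i ∈ Finset.range (j + 2), C (X ^ i) * X ^ i := by
    intro M
    induction M with
    | zero => simp [Lop]
    | succ M ih =>
      rw [Finset.sum_range_succ, Finset.sum_range_succ, ← ih, hL, hL,
        Polynomial.sum_add_index _ _ _ (by simp) (by intros; rw [C_add, add_mul]),
        C_mul_X_pow_eq_monomial (n := M), Polynomial.sum_monomial_index _ _ (by simp)]
  rw [hlin]
  simp only [Finset.mul_sum, map_sum, Finset.sum_mul]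
  rw [Finset.sum_comm' (t' := Finset.range (N + 1))
    (s' := fun k => (Finset.range N).filter (fun j => k ≤ j + 1))]
  · refine Finset.sum_congr rfl fun k _ => Finset.sum_congr rfl fun j _ => ?_
    rw [C_mul]
    ring
  · intro j k
    simp only [Finset.mem_range, Finset.mem_filter]
    omega

lemma Lop_iterate (m : ℕ) :
    Lop^[m] (1 : Polynomial (Polynomial ℝ)) =
      ∑ k ∈ Finset.range (m + 1), Polynomial.C (genPoly m k) * Polynomial.X ^ k := by
  induction m with
  | zero =>
    have : area (tailPath 0) = 2 := by decide
    simp [genPoly, prefixes, prefixRank, this]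
  | succ m ih =>
    rw [Function.iterate_succ_apply', ih, Lop_sum]
    simp only [genPoly_succ]

/-- For all `n ≥ 2`,
`L^{n−2}(1) = Σ_{k=0}^{n−2} P_n^{(k)}(x) · t^k` in `ℝ[x,t]`, where the integer
polynomials `P_n^{(k)}` are regarded as elements of `ℝ[x]`. -/
theorem Lop_iterate_eq_Pnk_generating (n : ℕ) (hn : 2 ≤ n) :
    Lop^[n - 2] (1 : Polynomial (Polynomial ℝ)) =
      ∑ k ∈ Finset.range (n - 1),
        Polynomial.C ((Pnk n k).map (Int.castRingHom ℝ)) * Polynomial.X ^ k := by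
  obtain ⟨m, rfl⟩ := Nat.exists_eq_add_of_le' hn
  simp only [Pnk_eq]
  exact Lop_iterate m
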